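/- For every integer r ≥ 1, every σ ∈ M_{r,∞}, every τ ∈ Aut(T_∞), and every word x, one has Q_r(σ∘τ, x) = Q_r(σ, τ(x)) + P_r(σ) · Q_r(τ, x) in ℤ₂. -/

import Mathlib

/-- Nodes of the infinite binary rooted tree `T_∞` are finite words over `{a,b}`,
encoded as `List Bool` with `a = false` and `b = true`; children of `w` are
`w ++ [false]` and `w ++ [true]`. An automorphism of `T_∞`. -/
def IsTreeAut (σ : List Bool → List Bool) : Prop :=
  Function.Bijective σ ∧ (∀ w, (σ w).length = w.length) ∧
    ∀ w s, ∃ t, σ (w ++ [s]) = σ w ++ [t]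

/-- The parity `Par(σ,x) ∈ {0,1}`: `0` if `σ(xa) = σ(x)a`, and `1` otherwise. -/
def par (σ : List Bool → List Bool) (x : List Bool) : ℕ :=
  if σ (x ++ [false]) = σ x ++ [false] then 0 else 1

/-- `W(r,i)`: the words `s₁ ⋯ s_{ri−1}` of length `r*i − 1` over `{a,b}` with
`s_j = a` whenever `r ∣ j`. -/
noncomputable def Wset (r i : ℕ) : Finset (List Bool) :=
  ((Finset.univ : Finset (Fin (r*i-1) → Bool)).filter
    (fun s => ∀ j : Fin (r*i-1), r ∣ (j:ℕ)+1 → s j = false)).image List.ofFn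

/-- `Q_r(σ,x) := Σ_{i≥1} 2^i Σ_{w ∈ W(r,i)} Par(σ, xw)` in `ℤ₂`. -/
noncomputable def Qr (r : ℕ) (σ : List Bool → List Bool) (x : List Bool) : ℤ_[2] :=
  ∑' i : ℕ, (2:ℤ_[2])^(i+1) * ∑ w ∈ Wset r (i+1), (par σ (x ++ w) : ℤ_[2])

/-- `P_r(σ,x) := (−1)^{Par(σ,x)} + Q_r(σ,xb) − Q_r(σ,xa)` in `ℤ₂`. -/
noncomputable def Pr (r : ℕ) (σ : List Bool → List Bool) (x : List Bool) : ℤ_[2] :=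
  (-1:ℤ_[2])^(par σ x) + Qr r σ (x ++ [true]) - Qr r σ (x ++ [false])

/-- `M_{r,∞}`: tree automorphisms for which `P_r(σ,·)` is constant. -/
def Mset (r : ℕ) : Set (List Bool → List Bool) :=
  {σ | IsTreeAut σ ∧ ∀ x₁ x₂ : List Bool, Pr r σ x₁ = Pr r σ x₂}

/-- `B_{r,∞}`: elements of `M_{r,∞}` with common value `P_r(σ) = 1`. -/
def Bset (r : ℕ) : Set (List Bool → List Bool) :=
  {σ | σ ∈ Mset r ∧ Pr r σ [] = 1}

theorem mem_Wset_iff (r i : ℕ) (w : List Bool) :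
    w ∈ Wset r i ↔ w.length = r*i-1 ∧ ∀ j, r ∣ j+1 → w.getD j false = false := by
  unfold Wset
  simp only [Finset.mem_image, Finset.mem_filter, Finset.mem_univ, true_and]
  constructor
  · rintro ⟨s, hs, rfl⟩
    refine ⟨by simp, fun j hj => ?_⟩
    by_cases h : j < r*i-1
    · simpa [List.getD, h] using hs ⟨j, h⟩ hj
    · simp [List.getD, h]
  · rintro ⟨hl, hw⟩
    refine ⟨fun j => w.getD j false, fun j hj => hw j hj, ?_⟩
    apply List.ext_getElem
    · simp [hl]
    · intro n h1 h2
      simp [h2]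

/-- All words of length `n`. -/
def allWords (n : ℕ) : Finset (List Bool) :=
  (Finset.univ : Finset (Fin n → Bool)).image List.ofFn

theorem mem_allWords (n : ℕ) (w : List Bool) : w ∈ allWords n ↔ w.length = n := by
  unfold allWords
  simp only [Finset.mem_image, Finset.mem_univ, true_and]
  constructor
  · rintro ⟨s, rfl⟩
    simp
  · rintro rfl
    exact ⟨w.get, List.ofFn_get w⟩

theorem Wset_one (r : ℕ) (hr : 1 ≤ r) : Wset r 1 = allWords (r-1) := by
  ext w
  rw [mem_Wset_iff, mem_allWords, mul_one]
  refine ⟨fun h => h.1, fun h => ⟨h, fun j hj => ?_⟩⟩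
  have := Nat.le_of_dvd (by omega) hj
  rw [List.getD_eq_default]
  omega

theorem sum_Wset_succ (r : ℕ) (hr : 1 ≤ r) (i : ℕ) (f : List Bool → ℤ_[2]) :
    ∑ w ∈ Wset r (i+2), f w =
      ∑ v ∈ allWords (r-1), ∑ u ∈ Wset r (i+1), f (v ++ [false] ++ u) := by
  rw [← Finset.sum_product']
  symm
  have e1 : r*(i+2) = r*(i+1) + r := by ring
  have e2 : r*(i+1) = r*i + r := by ring
  refine Finset.sum_nbij' (fun p => p.1 ++ [false] ++ p.2)
    (fun w => (w.take (r-1), w.drop r)) ?_ ?_ ?_ ?_ ?_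
  · rintro ⟨v, u⟩ h
    rw [Finset.mem_product, mem_allWords, mem_Wset_iff] at h
    obtain ⟨hv, hu, hd⟩ := h
    simp only at hv hu hd
    rw [mem_Wset_iff]
    refine ⟨by simp; omega, fun j hj => ?_⟩
    have hle := Nat.le_of_dvd (by omega) hj
    change (v ++ [false] ++ u).getD j false = false
    by_cases hjr : j < r
    · rw [List.getD_append _ _ _ _ (by simp; omega), List.getD_append_right _ _ _ _ (by omega)]
      have : j - v.length = 0 := by omega
      simp [this]
    · rw [List.getD_append_right _ _ _ _ (by simp; omega)]
      apply hd
      have : j - (v ++ [false]).length + 1 = j + 1 - r := by simp; omega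
      rw [this]
      exact Nat.dvd_sub hj dvd_rfl
  · intro w h
    rw [mem_Wset_iff] at h
    obtain ⟨hl, hd⟩ := h
    rw [Finset.mem_product, mem_allWords, mem_Wset_iff]
    refine ⟨by simp; omega, by simp; omega, fun j hj => ?_⟩
    have := hd (r + j) (by rw [add_assoc]; exact Dvd.dvd.add dvd_rfl hj)
    simpa [List.getD] using this
  · rintro ⟨v, u⟩ h
    rw [Finset.mem_product, mem_allWords, mem_Wset_iff] at h
    obtain ⟨hv, hu, hd⟩ := h
    simp only at hv hu hd
    have h1 : (v ++ [false]).length = r := by simp; omega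
    refine Prod.ext ?_ ?_
    · simp only [List.append_assoc]
      exact List.take_left' hv
    · exact List.drop_left' h1
  · intro w h
    rw [mem_Wset_iff] at h
    obtain ⟨hl, hd⟩ := h
    have hlt : r - 1 < w.length := by omega
    have h0 := hd (r-1) (by rw [Nat.sub_add_cancel hr])
    have h1 : w[r-1] = false := by simpa [List.getD, hlt] using h0
    have h2 : w.take (r-1) ++ [false] = w.take r := by
      have := List.take_concat_get' w (r-1) hlt
      rw [h1, Nat.sub_add_cancel hr] at this
      exact this
    simp only
    rw [h2, List.take_append_drop]
  · intro p _
    rfl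

theorem summable_Qr (r : ℕ) (σ : List Bool → List Bool) (x : List Bool) :
    Summable (fun i : ℕ => (2:ℤ_[2])^(i+1) * ∑ w ∈ Wset r (i+1), (par σ (x ++ w) : ℤ_[2])) := by
  refine Summable.of_norm_bounded (g := fun i : ℕ => ((1:ℝ)/2)^i) summable_geometric_two ?_
  intro i
  rw [norm_mul, norm_pow]
  have h2 : ‖(2:ℤ_[2])‖ = 1/2 := by
    have := PadicInt.norm_p (p := 2)
    simpa using this
  rw [h2, pow_succ]
  have h3 := PadicInt.norm_le_one (∑ w ∈ Wset r (i+1), (par σ (x ++ w) : ℤ_[2]))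
  have h4 : (0:ℝ) ≤ (1/2)^i := by positivity
  nlinarith [norm_nonneg (∑ w ∈ Wset r (i+1), (par σ (x ++ w) : ℤ_[2]))]

theorem Qr_rec (r : ℕ) (hr : 1 ≤ r) (σ : List Bool → List Bool) (x : List Bool) :
    Qr r σ x = 2 * ∑ v ∈ allWords (r-1),
      ((par σ (x ++ v) : ℤ_[2]) + Qr r σ (x ++ v ++ [false])) := by
  conv_lhs => unfold Qr
  rw [(summable_Qr r σ x).tsum_eq_zero_add, Finset.sum_add_distrib, mul_add]
  congr 1
  · simp [Wset_one r hr]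
  · unfold Qr
    rw [← Summable.tsum_finsetSum (fun v _ => summable_Qr r σ (x ++ v ++ [false])),
      ← (summable_sum (fun v _ => summable_Qr r σ (x ++ v ++ [false]))).tsum_mul_left]
    refine tsum_congr fun i => ?_
    rw [sum_Wset_succ r hr, ← Finset.mul_sum, pow_succ' _ (i+1), mul_assoc]
    simp only [List.append_assoc]

theorem IsTreeAut.append {τ : List Bool → List Bool} (hτ : IsTreeAut τ) (x v : List Bool) :
    ∃ u, u.length = v.length ∧ τ (x ++ v) = τ x ++ u := by
  induction v using List.reverseRecOn with
  | nil => exact ⟨[], rfl, by simp⟩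
  | append_singleton v s ih =>
    obtain ⟨u, hu, h⟩ := ih
    obtain ⟨t, ht⟩ := hτ.2.2 (x ++ v) s
    refine ⟨u ++ [t], by simp [hu], ?_⟩
    rw [← List.append_assoc, ht, h, List.append_assoc]

theorem sum_reindex {τ : List Bool → List Bool} (hτ : IsTreeAut τ) (x : List Bool) (n : ℕ)
    (g : List Bool → ℤ_[2]) :
    ∑ v ∈ allWords n, g (τ x ++ v) = ∑ v ∈ allWords n, g (τ (x ++ v)) := by
  symm
  choose u hu h using hτ.append x
  have hm : Set.MapsTo u (allWords n : Set (List Bool)) (allWords n : Set (List Bool)) := by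
    intro v hv
    simp only [Finset.mem_coe, mem_allWords] at hv ⊢
    rw [hu, hv]
  have hi : Set.InjOn u (allWords n : Set (List Bool)) := by
    intro v _ w _ hvw
    have : τ (x ++ v) = τ (x ++ w) := by rw [h, h, hvw]
    exact List.append_cancel_left (hτ.1.1 this)
  refine Finset.sum_nbij u hm hi (Finset.surjOn_of_injOn_of_card_le u hm hi le_rfl) ?_
  intro v _
  rw [h]

theorem IsTreeAut.apply_child {σ : List Bool → List Bool} (hσ : IsTreeAut σ) (y : List Bool) :
    (par σ y = 0 ∧ σ (y ++ [false]) = σ y ++ [false] ∧ σ (y ++ [true]) = σ y ++ [true]) ∨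
    (par σ y = 1 ∧ σ (y ++ [false]) = σ y ++ [true] ∧ σ (y ++ [true]) = σ y ++ [false]) := by
  obtain ⟨s, hs⟩ := hσ.2.2 y false
  obtain ⟨t, ht⟩ := hσ.2.2 y true
  have hne : s ≠ t := by
    rintro rfl
    have := hσ.1.1 (hs.trans ht.symm)
    simp at this
  unfold par
  rw [hs, ht]
  cases s <;> cases t <;> simp_all

theorem defect_step (r : ℕ) (σ τ : List Bool → List Bool)
    (hσ : σ ∈ Mset r) (hτ : IsTreeAut τ) (y : List Bool) :
    ((par (σ ∘ τ) y : ℤ_[2]) + Qr r (σ ∘ τ) (y ++ [false]))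
      - ((par σ (τ y) : ℤ_[2]) + Qr r σ (τ y ++ [false]))
      - Pr r σ [] * ((par τ y : ℤ_[2]) + Qr r τ (y ++ [false])) =
    Qr r (σ ∘ τ) (y ++ [false]) - Qr r σ (τ (y ++ [false]))
      - Pr r σ [] * Qr r τ (y ++ [false]) := by
  rcases hτ.apply_child y with ⟨h0, h1, h2⟩ | ⟨h0, h1, h2⟩
  · have : par (σ ∘ τ) y = par σ (τ y) := by simp [par, h1]
    rw [this, h0, h1]
    push_cast
    ring
  · have hP : Pr r σ [] = Pr r σ (τ y) := hσ.2 _ _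
    unfold Pr at hP
    rcases hσ.1.apply_child (τ y) with ⟨k0, k1, k2⟩ | ⟨k0, k1, k2⟩
    · have : par (σ ∘ τ) y = 1 := by simp [par, h1, k2]
      rw [this, h0, h1, k0]
      rw [k0] at hP
      unfold Pr
      push_cast
      linear_combination -hP
    · have : par (σ ∘ τ) y = 0 := by simp [par, h1, k2]
      rw [this, h0, h1, k0]
      rw [k0] at hP
      unfold Pr
      push_cast
      linear_combination -hP

theorem defect_rec (r : ℕ) (hr : 1 ≤ r) (σ τ : List Bool → List Bool)
    (hσ : σ ∈ Mset r) (hτ : IsTreeAut τ) (x : List Bool) :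
    Qr r (σ ∘ τ) x - Qr r σ (τ x) - Pr r σ [] * Qr r τ x =
    2 * ∑ v ∈ allWords (r-1), (Qr r (σ ∘ τ) (x ++ v ++ [false])
      - Qr r σ (τ (x ++ v ++ [false])) - Pr r σ [] * Qr r τ (x ++ v ++ [false])) := by
  rw [Qr_rec r hr (σ ∘ τ) x, Qr_rec r hr σ (τ x), Qr_rec r hr τ x,
    sum_reindex hτ x (r-1) (fun z => (par σ z : ℤ_[2]) + Qr r σ (z ++ [false]))]
  rw [Finset.sum_congr rfl (fun v _ => (defect_step r σ τ hσ hτ (x ++ v)).symm)]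
  rw [Finset.sum_sub_distrib, Finset.sum_sub_distrib, ← Finset.mul_sum]
  ring

theorem defect_dvd (r : ℕ) (hr : 1 ≤ r) (σ τ : List Bool → List Bool)
    (hσ : σ ∈ Mset r) (hτ : IsTreeAut τ) (n : ℕ) : ∀ x : List Bool,
    (2:ℤ_[2])^n ∣ Qr r (σ ∘ τ) x - Qr r σ (τ x) - Pr r σ [] * Qr r τ x := by
  induction n with
  | zero => intro x; simp
  | succ n ih =>
    intro x
    rw [defect_rec r hr σ τ hσ hτ x, pow_succ']
    exact mul_dvd_mul_left _ (Finset.dvd_sum fun v _ => ih _)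

theorem eq_zero_of_two_pow_dvd (z : ℤ_[2]) (h : ∀ n : ℕ, (2:ℤ_[2])^n ∣ z) : z = 0 := by
  by_contra hz
  have hfin : FiniteMultiplicity (2:ℤ_[2]) z := by
    apply FiniteMultiplicity.of_prime_left _ hz
    exact_mod_cast PadicInt.prime_p (p := 2)
  obtain ⟨n, hn⟩ := hfin
  exact hn (h (n+1))

/-- For every integer `r ≥ 1`, every `σ ∈ M_{r,∞}`, every
`τ ∈ Aut(T_∞)`, and every word `x`, one has
`Q_r(σ∘τ, x) = Q_r(σ, τ(x)) + P_r(σ) · Q_r(τ, x)` in `ℤ₂`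
(the common value `P_r(σ)` being realized as `Pr r σ []`). -/
theorem Qr_comp (r : ℕ) (hr : 1 ≤ r) (σ τ : List Bool → List Bool)
    (hσ : σ ∈ Mset r) (hτ : IsTreeAut τ) (x : List Bool) :
    Qr r (σ ∘ τ) x = Qr r σ (τ x) + Pr r σ [] * Qr r τ x := by
  have h := eq_zero_of_two_pow_dvd _ (fun n => defect_dvd r hr σ τ hσ hτ n x)
  linear_combination h
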